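/- arXiv:1604.06997 — 2 statements merged into one kernel-verified Lean document; each statement's English description precedes it below -/
import Mathlib

section
/- For every p ∈ G, either CP(p) ∈ MMC or CP(p) ∈ MFC. -/
open Finset

attribute [local instance] Classical.propDecidable

/-- A point in the plane: first coordinate is the key, second is the time. -/
abbrev Pt : Type := ℤ × ℤ

/-- `r` lies in the closed axis-parallel rectangle with opposite corners `p` and `q`. -/
def inRect (p q r : Pt) : Prop :=
  min p.1 q.1 ≤ r.1 ∧ r.1 ≤ max p.1 q.1 ∧ min p.2 q.2 ≤ r.2 ∧ r.2 ≤ max p.2 q.2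

/-- `r` lies in the open axis-parallel rectangle with opposite corners `p` and `q`. -/
def inOpenRect (p q r : Pt) : Prop :=
  min p.1 q.1 < r.1 ∧ r.1 < max p.1 q.1 ∧ min p.2 q.2 < r.2 ∧ r.2 < max p.2 q.2

/-- `S` is an arborally satisfied set. -/
def ArbSat (S : Finset Pt) : Prop :=
  ∀ p ∈ S, ∀ q ∈ S, p.1 = q.1 ∨ p.2 = q.2 ∨ ∃ r ∈ S, r ≠ p ∧ r ≠ q ∧ inRect p q r

/-- `X` is the permutation point set `{(σ(t), t) : 1 ≤ t ≤ n}` of some permutation `σ` of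
`{1, …, n}`. -/
def IsPermPointSet (n : ℕ) (X : Finset Pt) : Prop :=
  ∃ σ : Equiv.Perm (Fin n),
    X = Finset.univ.image (fun t : Fin n => ((((σ t : ℕ) : ℤ) + 1, ((t : ℕ) : ℤ) + 1) : Pt))

/-- The points added by GREEDY at time `t`, given the point set `X` and the set `G` of points
added before time `t`: for the point `p` of `X` with time `t` and each point `q` of time `< t`
with a different key such that the rectangle spanned by `p` and `q` contains no other point of
time `< t`, the point `(key q, t)` is added. -/
noncomputable def greedyStep (X G : Finset Pt) (t : ℤ) : Finset Pt :=
  (X.filter (fun p => p.2 = t)).biUnion (fun p =>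
    (((X ∪ G).filter (fun s => s.2 < t)).filter (fun q =>
      q.1 ≠ p.1 ∧ ∀ r ∈ (X ∪ G).filter (fun s => s.2 < t), inRect p q r → r = q)).image
      (fun q => ((q.1, t) : Pt)))

/-- All points added by GREEDY while processing times `1, …, t`. -/
noncomputable def greedyUpTo (X : Finset Pt) : ℕ → Finset Pt
  | 0 => ∅
  | t + 1 => greedyUpTo X t ∪ greedyStep X (greedyUpTo X t) ((t : ℤ) + 1)

/-- The set `G` of points added by GREEDY over the whole execution on a permutation point set
`X` of size `n`. -/
noncomputable def greedyG (n : ℕ) (X : Finset Pt) : Finset Pt := greedyUpTo X n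

/-- `OP r` is the point of `X` processed at the time at which `r` was added; for `r ∈ X`,
`OP r = r`. -/
noncomputable def OP (X : Finset Pt) (r : Pt) : Pt :=
  ((X.filter (fun p => p.2 = r.2)).toList).headI

/-- The first point of `S` above `p`: the point of `S` with the same key as `p`, smaller time,
and the largest such time. -/
noncomputable def firstAbove (S : Finset Pt) (p : Pt) : Pt :=
  (p.1, (((S.filter (fun q => q.1 = p.1 ∧ q.2 < p.2)).image Prod.snd).max).unbotD 0)

/-- The pair `CP(p) = (OP(p), OP(q))` where `q` is the first point of `X ∪ G` above `p`. -/
noncomputable def CP (X G : Finset Pt) (p : Pt) : Pt × Pt :=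
  (OP X p, OP X (firstAbove (X ∪ G) p))

/-- `CP(p) ∈ MMC` (*zig*). -/
def inMMC (X G : Finset Pt) (p : Pt) : Prop :=
  ((CP X G p).1.1 < p.1 ∧ (CP X G p).2.1 < (CP X G p).1.1 ∧ (CP X G p).2.2 < (CP X G p).1.2)
  ∨ (p.1 < (CP X G p).1.1 ∧ (CP X G p).1.1 < (CP X G p).2.1 ∧ (CP X G p).2.2 < (CP X G p).1.2)

/-- `CP(p) ∈ MFC` (*zag*). -/
def inMFC (X G : Finset Pt) (p : Pt) : Prop :=
  ((CP X G p).1.1 < p.1 ∧ p.1 ≤ (CP X G p).2.1 ∧ (CP X G p).2.2 < p.2)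
  ∨ (p.1 < (CP X G p).1.1 ∧ (CP X G p).2.1 ≤ p.1 ∧ (CP X G p).2.2 < p.2)

/-- A pair is good if no point of `X` lies in the open rectangle spanned by it. -/
def IsGoodPair (X : Finset Pt) (pr : Pt × Pt) : Prop :=
  ∀ r ∈ X, ¬ inOpenRect pr.1 pr.2 r

/-- `B` is a block of `X`: the set of points of `X` whose times lie in some interval, whose
keys form a set of consecutive integers; blocks are nonempty. -/
def IsBlock (X B : Finset Pt) : Prop :=
  B.Nonempty ∧ (∃ i j : ℤ, B = X.filter (fun p => i ≤ p.2 ∧ p.2 ≤ j)) ∧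
    ∃ c d : ℤ, B.image Prod.fst = Finset.Icc c d

/-- `Top(B)`: the point of `B` with the smallest time. -/
noncomputable def TopPt (B : Finset Pt) : Pt :=
  ((B.filter (fun p => ∀ q ∈ B, p.2 ≤ q.2)).toList).headI

/-- A decomposition tree of `X`: a rooted tree whose nodes are blocks of `X`, whose root is
`X`, whose leaves are exactly the singleton blocks, and in which the children of every
internal node partition it. -/
structure DecompTree (X : Finset Pt) where
  nodes : Finset (Finset Pt)
  parent : Finset Pt → Finset Pt
  isBlock_nodes : ∀ B ∈ nodes, IsBlock X B
  root_mem : X ∈ nodes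
  parent_mem : ∀ B ∈ nodes, B ≠ X → parent B ∈ nodes
  ssubset_parent : ∀ B ∈ nodes, B ≠ X → B ⊂ parent B
  leaf_iff : ∀ B ∈ nodes, (¬ ∃ C ∈ nodes, C ≠ X ∧ parent C = B) ↔ B.card = 1
  children_partition : ∀ B ∈ nodes, B.card ≠ 1 →
    ∀ x ∈ B, ∃! C, C ∈ nodes ∧ C ≠ X ∧ parent C = B ∧ x ∈ C

/-- The children of a node `B` in a decomposition tree. -/
noncomputable def DecompTree.children {X : Finset Pt} (T : DecompTree X) (B : Finset Pt) :
    Finset (Finset Pt) :=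
  T.nodes.filter (fun C => C ≠ X ∧ T.parent C = B)

/-- `X` is `k`-decomposable: it admits a decomposition tree in which every node has at most
`k` children. -/
def kDecomposable (k : ℕ) (X : Finset Pt) : Prop :=
  ∃ T : DecompTree X, ∀ B ∈ T.nodes, (T.children B).card ≤ k

/-- `RT(p)`: the node of the decomposition tree closest to the root (i.e. containing all
others) among the nodes `B` with `Top(B) = p`. -/
noncomputable def RT {X : Finset Pt} (T : DecompTree X) (p : Pt) : Finset Pt :=
  (((T.nodes.filter (fun B => TopPt B = p)).filter
      (fun B => ∀ C ∈ T.nodes, TopPt C = p → C ⊆ B)).toList).headI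

/-- The points added by GREEDY (`G`) while processing `Top(B)` that lie to the left of
`Top(B)`. -/
noncomputable def leftSet (G B : Finset Pt) : Finset Pt :=
  G.filter (fun s => s.2 = (TopPt B).2 ∧ s.1 < (TopPt B).1)

/-- `Left(B)`: among the points added by GREEDY while processing `Top(B)` with key less than
`key (Top B)`, the one with the largest key (junk if none exists). -/
noncomputable def leftPt (G B : Finset Pt) : Pt :=
  (((leftSet G B).filter (fun s => ∀ r ∈ leftSet G B, r.1 ≤ s.1)).toList).headI

/-- The points added by GREEDY (`G`) while processing `Top(B)` that lie to the right of
`Top(B)`. -/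
noncomputable def rightSet (G B : Finset Pt) : Finset Pt :=
  G.filter (fun s => s.2 = (TopPt B).2 ∧ (TopPt B).1 < s.1)

/-- `Right(B)`: among the points added by GREEDY while processing `Top(B)` with key greater
than `key (Top B)`, the one with the smallest key (junk if none exists). -/
noncomputable def rightPt (G B : Finset Pt) : Pt :=
  (((rightSet G B).filter (fun s => ∀ r ∈ rightSet G B, s.1 ≤ r.1)).toList).headI

theorem greedyUpTo_mono (X : Finset Pt) : Monotone (greedyUpTo X) :=
  monotone_nat_of_le_succ fun _ => Finset.subset_union_left

theorem mem_greedyUpTo_iff {X : Finset Pt} {n : ℕ} {p : Pt} :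
    p ∈ greedyUpTo X n ↔ ∃ k < n, p ∈ greedyStep X (greedyUpTo X k) ((k : ℤ) + 1) := by
  induction n with
  | zero => simp [greedyUpTo]
  | succ n ih =>
    rw [greedyUpTo, Finset.mem_union, ih]
    simp only [Nat.lt_succ_iff_lt_or_eq, or_and_right, exists_or, exists_eq_left]

/-- A point added at time `t` stands below a point `q` of smaller time whose rectangle with the
processed point `a` is otherwise empty. -/
theorem mem_greedyStep_iff {X G : Finset Pt} {t : ℤ} {p : Pt} :
    p ∈ greedyStep X G t ↔ p.2 = t ∧ ∃ a ∈ X, a.2 = t ∧ ∃ q ∈ X ∪ G, q.2 < t ∧ q.1 = p.1 ∧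
      p.1 ≠ a.1 ∧ ∀ r ∈ X ∪ G, r.2 < t → inRect a q r → r = q := by
  obtain ⟨x, s⟩ := p
  simp only [greedyStep, Finset.mem_biUnion, Finset.mem_filter, Finset.mem_image, Prod.mk.injEq]
  constructor
  · rintro ⟨a, ⟨ha, hat⟩, q, ⟨⟨hq, hqt⟩, hne, hr⟩, rfl, rfl⟩
    exact ⟨rfl, a, ha, hat, q, hq, hqt, rfl, hne, fun r hrm hrt => hr r ⟨hrm, hrt⟩⟩
  · rintro ⟨rfl, a, ha, hat, q, hq, hqt, rfl, hne, hr⟩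
    exact ⟨a, ⟨ha, hat⟩, q, ⟨⟨hq, hqt⟩, hne, fun r hrm => hr r hrm.1 hrm.2⟩, rfl, rfl⟩

/-- Points of smaller time in a later stage of GREEDY were already present before. -/
theorem mem_greedyUpTo_of_time_lt {X : Finset Pt} {n k : ℕ} {r : Pt}
    (hr : r ∈ greedyUpTo X n) (hrk : r.2 < (k : ℤ) + 1) : r ∈ greedyUpTo X k := by
  obtain ⟨j, _, hj⟩ := mem_greedyUpTo_iff.1 hr
  have := (mem_greedyStep_iff.1 hj).1
  exact mem_greedyUpTo_iff.2 ⟨j, by omega, hj⟩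

theorem exists_mem_time_eq {X : Finset Pt} {n : ℕ} {r : Pt} (hr : r ∈ X ∪ greedyUpTo X n) :
    ∃ a ∈ X, a.2 = r.2 := by
  rcases Finset.mem_union.1 hr with h | h
  · exact ⟨r, h, rfl⟩
  · obtain ⟨j, _, hj⟩ := mem_greedyUpTo_iff.1 h
    obtain ⟨ht, a, ha, hat, _⟩ := mem_greedyStep_iff.1 hj
    exact ⟨a, ha, hat.trans ht.symm⟩

theorem IsPermPointSet.eq_of_time_eq {n : ℕ} {X : Finset Pt} (hX : IsPermPointSet n X) {a b : Pt}
    (ha : a ∈ X) (hb : b ∈ X) (h : a.2 = b.2) : a = b := by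
  obtain ⟨σ, rfl⟩ := hX
  simp only [Finset.mem_image, Finset.mem_univ, true_and] at ha hb
  obtain ⟨s, rfl⟩ := ha
  obtain ⟨t, rfl⟩ := hb
  have : s = t := Fin.ext (by simpa using h)
  rw [this]

theorem OP_mem_and_time {X : Finset Pt} {r : Pt} (h : ∃ a ∈ X, a.2 = r.2) :
    OP X r ∈ X ∧ (OP X r).2 = r.2 := by
  obtain ⟨a, ha, hat⟩ := h
  rw [← Finset.mem_filter (p := fun p : Pt => p.2 = r.2), ← Finset.mem_toList, OP]
  have hm : a ∈ (X.filter (fun p => p.2 = r.2)).toList := by simp [ha, hat]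
  generalize (X.filter (fun p => p.2 = r.2)).toList = l at hm ⊢
  cases l <;> simp_all

theorem firstAbove_eq_of_forall_le {S : Finset Pt} {p q : Pt} (hq : q ∈ S) (hkey : q.1 = p.1)
    (htime : q.2 < p.2) (hmax : ∀ r ∈ S, r.1 = p.1 → r.2 < p.2 → r.2 ≤ q.2) :
    firstAbove S p = q := by
  have h : ((S.filter (fun q => q.1 = p.1 ∧ q.2 < p.2)).image Prod.snd).max = (q.2 : WithBot ℤ) := by
    apply le_antisymm
    · refine Finset.max_le fun m hm => ?_
      obtain ⟨r, hr, rfl⟩ := Finset.mem_image.1 hm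
      obtain ⟨hrS, hrk, hrt⟩ := Finset.mem_filter.1 hr
      exact WithBot.coe_le_coe.2 (hmax r hrS hrk hrt)
    · exact Finset.le_max
        (Finset.mem_image_of_mem _ (Finset.mem_filter.2 ⟨hq, hkey, htime⟩))
  rw [firstAbove, h]
  exact Prod.ext hkey.symm rfl

/-- For every `p ∈ G`, either `CP(p) ∈ MMC` or `CP(p) ∈ MFC`. -/
theorem cp_mmc_or_mfc (n : ℕ) (X : Finset Pt) (hX : IsPermPointSet n X) :
    ∀ p ∈ greedyG n X, inMMC X (greedyG n X) p ∨ inMFC X (greedyG n X) p := by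
  intro p hp
  unfold greedyG at *
  obtain ⟨k, hk, hpk⟩ := mem_greedyUpTo_iff.1 hp
  obtain ⟨hpt, a, ha, hat, q, hq, hqt, hqp, hne, hempty⟩ := mem_greedyStep_iff.1 hpk
  have hqS : q ∈ X ∪ greedyUpTo X n :=
    Finset.union_subset_union_right (greedyUpTo_mono X hk.le) hq
  have hfirst : firstAbove (X ∪ greedyUpTo X n) p = q := by
    refine firstAbove_eq_of_forall_le hqS hqp (hpt ▸ hqt) fun r hr hrk hrt => ?_
    by_contra! hlt
    have hr' : r ∈ X ∪ greedyUpTo X k := by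
      rcases Finset.mem_union.1 hr with h | h
      · exact Finset.mem_union_left _ h
      · exact Finset.mem_union_right _ (mem_greedyUpTo_of_time_lt h (hpt ▸ hrt))
    have := hempty r hr' (hpt ▸ hrt) (by unfold inRect; omega)
    exact hlt.ne (congrArg Prod.snd this).symm
  have hOPp : OP X p = a := by
    obtain ⟨hm, ht⟩ := OP_mem_and_time (X := X) (r := p) ⟨a, ha, hat.trans hpt.symm⟩
    exact hX.eq_of_time_eq hm ha (by omega)
  obtain ⟨hb, hbt⟩ := OP_mem_and_time (exists_mem_time_eq hqS)
  have hrect : inRect a q (OP X q) → (OP X q).1 = q.1 := fun h =>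
    congrArg Prod.fst (hempty _ (Finset.mem_union_left _ hb) (by omega) h)
  unfold inRect at hrect
  simp only [inMMC, inMFC, CP, hfirst, hOPp]
  omega
end

section
/- Fix a decomposition tree of X. Let p ∈ X, let p₁ ∈ G with CP(p₁) = (p, q), and let B := RT(p). Then B is not the root of the decomposition tree and q belongs to some block B′ that is a child of the parent of B with B′ ≠ B. -/
open Finset

attribute [local instance] Classical.propDecidable

/-- Processing `p` makes GREEDY touch the point `u` of `S`: the rectangle spanned by `p` and `u`
contains no other point of `S` that is earlier than `p`. -/
def Touches (S : Finset Pt) (p u : Pt) : Prop :=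
  u ∈ S ∧ u.2 < p.2 ∧ u.1 ≠ p.1 ∧ ∀ r ∈ S, r.2 < p.2 → inRect p u r → r = u

theorem Finset.headI_toList_mem {α : Type*} [Inhabited α] {s : Finset α} (hs : s.Nonempty) :
    s.toList.headI ∈ s := by
  rw [← Finset.mem_toList]
  have h : s.toList ≠ [] := by simpa using hs.ne_empty
  cases hl : s.toList with
  | nil => exact absurd hl h
  | cons a l => simp

theorem mem_greedyStep {X G : Finset Pt} {t : ℤ} {r : Pt} :
    r ∈ greedyStep X G t ↔
      r.2 = t ∧ ∃ p ∈ X, p.2 = r.2 ∧ ∃ u, u.1 = r.1 ∧ Touches (X ∪ G) p u := by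
  obtain ⟨k, s⟩ := r
  simp only [greedyStep, Touches, mem_biUnion, mem_image, mem_filter, Prod.mk.injEq]
  constructor
  · rintro ⟨p, ⟨hp, rfl⟩, u, ⟨⟨hu, hlt⟩, hne, hr⟩, rfl, rfl⟩
    exact ⟨rfl, p, hp, rfl, u, rfl, hu, hlt, hne, fun r h1 h2 => hr r ⟨h1, h2⟩⟩
  · rintro ⟨rfl, p, hp, rfl, u, rfl, hu, hlt, hne, hr⟩
    exact ⟨p, ⟨hp, rfl⟩, u, ⟨⟨hu, hlt⟩, hne, fun r h => hr r h.1 h.2⟩, rfl, rfl⟩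

theorem mem_greedyUpTo {X : Finset Pt} {m : ℕ} {r : Pt} :
    r ∈ greedyUpTo X m ↔
      ∃ t < m, r.2 = (t : ℤ) + 1 ∧ r ∈ greedyStep X (greedyUpTo X t) ((t : ℤ) + 1) := by
  induction m with
  | zero => simp [greedyUpTo]
  | succ m ih =>
    rw [greedyUpTo, mem_union, ih]
    constructor
    · rintro (⟨t, ht, h⟩ | h)
      · exact ⟨t, by lia, h⟩
      · exact ⟨m, by lia, (mem_greedyStep.1 h).1, h⟩
    · rintro ⟨t, ht, h⟩
      rcases Nat.lt_succ_iff_lt_or_eq.1 ht with h' | rfl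
      · exact Or.inl ⟨t, h', h⟩
      · exact Or.inr h.2

theorem mem_greedyUpTo_iff_of_time_lt {X : Finset Pt} {t m : ℕ} (htm : t ≤ m) {r : Pt}
    (hr : r.2 < (t : ℤ) + 1) : r ∈ greedyUpTo X t ↔ r ∈ greedyUpTo X m := by
  rw [mem_greedyUpTo, mem_greedyUpTo]
  constructor
  · rintro ⟨s, hs, h⟩
    exact ⟨s, by lia, h⟩
  · rintro ⟨s, hs, h⟩
    exact ⟨s, by have := h.1; lia, h⟩

theorem touches_congr {S S' : Finset Pt} {p u : Pt}
    (h : ∀ r : Pt, r.2 < p.2 → (r ∈ S ↔ r ∈ S')) : Touches S p u ↔ Touches S' p u := by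
  unfold Touches
  constructor
  · rintro ⟨hu, hlt, hne, hr⟩
    exact ⟨(h u hlt).1 hu, hlt, hne, fun r h1 h2 => hr r ((h r h2).2 h1) h2⟩
  · rintro ⟨hu, hlt, hne, hr⟩
    exact ⟨(h u hlt).2 hu, hlt, hne, fun r h1 h2 => hr r ((h r h2).1 h1) h2⟩

/-- The points of `G` are exactly those touched while processing a point of `X`. -/
theorem mem_greedyG {n : ℕ} {X : Finset Pt} {r : Pt} :
    r ∈ greedyG n X ↔ (1 ≤ r.2 ∧ r.2 ≤ n) ∧
      ∃ p ∈ X, p.2 = r.2 ∧ ∃ u, u.1 = r.1 ∧ Touches (X ∪ greedyG n X) p u := by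
  have key : ∀ t < n, ∀ p u : Pt, p.2 = (t : ℤ) + 1 →
      (Touches (X ∪ greedyUpTo X t) p u ↔ Touches (X ∪ greedyG n X) p u) := by
    intro t ht p u hp
    refine touches_congr fun r hr => ?_
    rw [mem_union, mem_union, greedyG,
      mem_greedyUpTo_iff_of_time_lt (X := X) (show t ≤ n by lia) (hp ▸ hr)]
  rw [greedyG, mem_greedyUpTo]
  constructor
  · rintro ⟨t, ht, hrt, h⟩
    obtain ⟨-, p, hp, hpr, u, hu, hT⟩ := mem_greedyStep.1 h
    exact ⟨by lia, p, hp, hpr, u, hu, (key t ht p u (by lia)).1 hT⟩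
  · rintro ⟨hr, p, hp, hpr, u, hu, hT⟩
    have hcast : r.2 = ((r.2 - 1).toNat : ℤ) + 1 := by lia
    refine ⟨(r.2 - 1).toNat, by lia, hcast, mem_greedyStep.2 ⟨hcast, p, hp, hpr, u, hu, ?_⟩⟩
    exact (key _ (by lia) p u (by lia)).2 hT

/-- Every point of `X ∪ G` has a point of `X` with the same key and no larger time. -/
theorem exists_mem_key_eq_time_le {n : ℕ} {X : Finset Pt} {r : Pt} (hr : r ∈ X ∪ greedyG n X) :
    ∃ x ∈ X, x.1 = r.1 ∧ x.2 ≤ r.2 := by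
  suffices H : ∀ (m : ℕ) (r : Pt), r ∈ X ∪ greedyG n X → r.2 < m →
      ∃ x ∈ X, x.1 = r.1 ∧ x.2 ≤ r.2 from
    H (r.2.toNat + 1) r hr (by lia)
  intro m
  induction m with
  | zero =>
    intro r hr hm
    rcases mem_union.1 hr with h | h
    · exact ⟨r, h, rfl, le_rfl⟩
    · have := (mem_greedyG.1 h).1
      lia
  | succ m ih =>
    intro r hr hm
    rcases mem_union.1 hr with h | h
    · exact ⟨r, h, rfl, le_rfl⟩
    · obtain ⟨-, p, -, hpr, u, hu, huS, hlt, -⟩ := mem_greedyG.1 h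
      obtain ⟨x, hx, hxu, hxt⟩ := ih u huS (by lia)
      exact ⟨x, hx, hxu.trans hu, by lia⟩

theorem IsPermPointSet.eq_of_key_eq {n : ℕ} {X : Finset Pt} (hX : IsPermPointSet n X) {x y : Pt}
    (hx : x ∈ X) (hy : y ∈ X) (h : x.1 = y.1) : x = y := by
  obtain ⟨σ, rfl⟩ := hX
  simp only [mem_image, mem_univ, true_and] at hx hy
  obtain ⟨s, rfl⟩ := hx
  obtain ⟨t, rfl⟩ := hy
  have : σ s = σ t := Fin.ext (by simpa using h)
  rw [σ.injective this]

theorem IsPermPointSet.eq_of_time_eq_s14 {n : ℕ} {X : Finset Pt} (hX : IsPermPointSet n X) {x y : Pt}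
    (hx : x ∈ X) (hy : y ∈ X) (h : x.2 = y.2) : x = y := by
  obtain ⟨σ, rfl⟩ := hX
  simp only [mem_image, mem_univ, true_and] at hx hy
  obtain ⟨s, rfl⟩ := hx
  obtain ⟨t, rfl⟩ := hy
  have : s = t := Fin.ext (by simpa using h)
  rw [this]

theorem IsPermPointSet.time_mem_range {n : ℕ} {X : Finset Pt} (hX : IsPermPointSet n X) {x : Pt}
    (hx : x ∈ X) : 1 ≤ x.2 ∧ x.2 ≤ n := by
  obtain ⟨σ, rfl⟩ := hX
  simp only [mem_image, mem_univ, true_and] at hx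
  obtain ⟨s, rfl⟩ := hx
  have := s.2
  constructor <;> simp only <;> lia

theorem OP_spec {n : ℕ} {X : Finset Pt} {r : Pt} (hr : r ∈ X ∪ greedyG n X) :
    OP X r ∈ X ∧ (OP X r).2 = r.2 := by
  have hne : (X.filter (fun p => p.2 = r.2)).Nonempty := by
    rcases mem_union.1 hr with h | h
    · exact ⟨r, by simp [h]⟩
    · obtain ⟨-, p, hp, hpr, -⟩ := mem_greedyG.1 h
      exact ⟨p, by simp [hp, hpr]⟩
  exact mem_filter.1 (Finset.headI_toList_mem hne)

/-- The first point above `p` is the point above `p` that no other point above `p` exceeds. -/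
theorem firstAbove_eq {S : Finset Pt} {p u : Pt} (hu : u ∈ S) (hk : u.1 = p.1) (ht : u.2 < p.2)
    (hmax : ∀ r ∈ S, r.1 = p.1 → r.2 < p.2 → r.2 ≤ u.2) : firstAbove S p = u := by
  have hmaxeq : ((S.filter (fun q => q.1 = p.1 ∧ q.2 < p.2)).image Prod.snd).max =
      (u.2 : WithBot ℤ) := by
    refine le_antisymm (Finset.max_le fun a ha => ?_) (Finset.le_max ?_)
    · obtain ⟨r, hr, rfl⟩ := mem_image.1 ha
      obtain ⟨h1, h2, h3⟩ := mem_filter.1 hr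
      exact WithBot.coe_le_coe.2 (hmax r h1 h2 h3)
    · exact mem_image.2 ⟨u, mem_filter.2 ⟨hu, hk, ht⟩, rfl⟩
  unfold firstAbove
  rw [hmaxeq]
  exact Prod.ext hk.symm rfl

theorem TopPt_spec {B : Finset Pt} (hB : B.Nonempty) :
    TopPt B ∈ B ∧ ∀ q ∈ B, (TopPt B).2 ≤ q.2 := by
  obtain ⟨a, ha, hmin⟩ := B.exists_min_image Prod.snd hB
  have h := Finset.headI_toList_mem (s := B.filter (fun p => ∀ q ∈ B, p.2 ≤ q.2))
    ⟨a, mem_filter.2 ⟨ha, hmin⟩⟩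
  rw [mem_filter] at h
  unfold TopPt
  exact h

/-- A block contains every point of `X` whose time lies between the times of two of its points. -/
theorem IsBlock.mem_of_time {X B : Finset Pt} (hB : IsBlock X B) {x y z : Pt} (hx : x ∈ B)
    (hy : y ∈ B) (hz : z ∈ X) (h1 : x.2 ≤ z.2) (h2 : z.2 ≤ y.2) : z ∈ B := by
  obtain ⟨-, ⟨i, j, rfl⟩, -⟩ := hB
  simp only [mem_filter] at *
  exact ⟨hz, by lia, by lia⟩

theorem IsBlock.subset {X B : Finset Pt} (hB : IsBlock X B) : B ⊆ X := by
  obtain ⟨-, ⟨i, j, rfl⟩, -⟩ := hB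
  exact filter_subset _ _

/-- A block contains some point with each key between the keys of two of its points. -/
theorem IsBlock.exists_key {X B : Finset Pt} (hB : IsBlock X B) {x y : Pt} (hx : x ∈ B)
    (hy : y ∈ B) {k : ℤ} (h1 : x.1 ≤ k) (h2 : k ≤ y.1) : ∃ z ∈ B, z.1 = k := by
  obtain ⟨-, -, c, d, h⟩ := hB
  have hx' := h ▸ mem_image_of_mem Prod.fst hx
  have hy' := h ▸ mem_image_of_mem Prod.fst hy
  rw [mem_Icc] at hx' hy'
  exact mem_image.1 (h ▸ mem_Icc.2 ⟨by lia, by lia⟩)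

/-- Blocks with the same top are comparable. -/
theorem IsBlock.subset_or_subset {X B C : Finset Pt} (hB : IsBlock X B) (hC : IsBlock X C)
    (h : TopPt B = TopPt C) : B ⊆ C ∨ C ⊆ B := by
  by_contra! hcon
  obtain ⟨⟨x, hxB, hxC⟩, ⟨y, hyC, hyB⟩⟩ := hcon.imp not_subset.1 not_subset.1
  have tB := TopPt_spec hB.1
  have tC := TopPt_spec hC.1
  rcases le_total x.2 y.2 with hxy | hxy
  · exact hxC (hC.mem_of_time tC.1 hyC (hB.subset hxB) (h ▸ tB.2 x hxB) hxy)
  · exact hyB (hB.mem_of_time tB.1 hxB (hC.subset hyC) (h ▸ tC.2 y hyC) hxy)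

theorem DecompTree.exists_node_TopPt_eq {X : Finset Pt} (T : DecompTree X) {p : Pt} (hp : p ∈ X) :
    ∃ B ∈ T.nodes, TopPt B = p := by
  obtain ⟨B, hB, hmin⟩ := (T.nodes.filter (fun B => p ∈ B)).exists_min_image Finset.card
    ⟨X, mem_filter.2 ⟨T.root_mem, hp⟩⟩
  obtain ⟨hB, hpB⟩ := mem_filter.1 hB
  refine ⟨B, hB, ?_⟩
  by_cases hcard : B.card = 1
  · obtain ⟨b, rfl⟩ := card_eq_one.1 hcard
    rw [mem_singleton.1 (TopPt_spec ⟨b, mem_singleton_self b⟩).1, mem_singleton.1 hpB]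
  · obtain ⟨C, ⟨hC, hCX, rfl, hpC⟩, -⟩ := T.children_partition B hB hcard p hpB
    have := card_lt_card (T.ssubset_parent C hC hCX)
    have := hmin C (mem_filter.2 ⟨hC, hpC⟩)
    lia

theorem RT_spec {X : Finset Pt} (T : DecompTree X) {p : Pt} (hp : p ∈ X) :
    RT T p ∈ T.nodes ∧ TopPt (RT T p) = p ∧ ∀ C ∈ T.nodes, TopPt C = p → C ⊆ RT T p := by
  obtain ⟨B₀, hB₀, h₀⟩ := T.exists_node_TopPt_eq hp
  obtain ⟨B, hB, hmax⟩ := (T.nodes.filter (fun B => TopPt B = p)).exists_max_image Finset.card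
    ⟨B₀, mem_filter.2 ⟨hB₀, h₀⟩⟩
  have hB' := mem_filter.1 hB
  have hne : ((T.nodes.filter (fun B => TopPt B = p)).filter
      (fun B => ∀ C ∈ T.nodes, TopPt C = p → C ⊆ B)).Nonempty := by
    refine ⟨B, mem_filter.2 ⟨hB, fun C hC hCp => ?_⟩⟩
    rcases (T.isBlock_nodes C hC).subset_or_subset (T.isBlock_nodes B hB'.1)
      (hCp.trans hB'.2.symm) with h | h
    · exact h
    · exact (eq_of_subset_of_card_le h (hmax C (mem_filter.2 ⟨hC, hCp⟩))).symm.subset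
  have := Finset.headI_toList_mem hne
  simp only [mem_filter] at this
  exact ⟨this.1.1, this.1.2, this.2⟩

/-- No point of `X ∪ G` in the key range of a block precedes the top of the block. -/
theorem IsBlock.top_time_le {n : ℕ} {X B : Finset Pt} (hX : IsPermPointSet n X) (hB : IsBlock X B)
    {x y r : Pt} (hx : x ∈ B) (hy : y ∈ B) (hr : r ∈ X ∪ greedyG n X) (h1 : x.1 ≤ r.1)
    (h2 : r.1 ≤ y.1) : (TopPt B).2 ≤ r.2 := by
  obtain ⟨z, hzB, hz⟩ := hB.exists_key hx hy h1 h2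
  obtain ⟨w, hw, hwr, hwt⟩ := exists_mem_key_eq_time_le hr
  have : w = z := hX.eq_of_key_eq hw (hB.subset hzB) (hwr.trans hz.symm)
  exact ((TopPt_spec hB.1).2 z hzB).trans (this ▸ hwt)

/-- A point of a block other than its top touches no point preceding the top. -/
theorem IsBlock.top_time_le_of_touches {n : ℕ} {X A : Finset Pt} (hX : IsPermPointSet n X)
    (hA : IsBlock X A) {p u : Pt} (hp : p ∈ A) (htop : (TopPt A).2 < p.2)
    (hT : Touches (X ∪ greedyG n X) p u) : (TopPt A).2 ≤ u.2 := by
  by_contra! hlt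
  obtain ⟨haA, -⟩ := TopPt_spec hA.1
  have hfar : ∀ x ∈ A, ∀ y ∈ A, ∀ r ∈ X ∪ greedyG n X, r.2 < (TopPt A).2 →
      ¬ (x.1 ≤ r.1 ∧ r.1 ≤ y.1) := fun x hx y hy r hr hrt h =>
    absurd (hA.top_time_le hX hx hy hr h.1 h.2) (by lia)
  set a := TopPt A with ha
  obtain ⟨huS, hup, hne, hempty⟩ := hT
  have haX : a ∈ X := hA.subset haA
  have hua := hfar a haA p hp u huS hlt
  have hua' := hfar p hp a haA u huS hlt
  have hua'' := hfar a haA a haA u huS hlt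
  -- `a` itself is not in the rectangle spanned by `p` and `u`, so `p` is between `a` and `u`
  have hnot : ¬ inRect p u a := fun h => by
    have := hempty a (mem_union_left _ haX) htop h
    rw [this] at hlt
    exact lt_irrefl _ hlt
  have hTa : Touches (X ∪ greedyG n X) a u := by
    refine ⟨huS, hlt, by lia, fun r hr hra hrect => hempty r hr (by lia) ?_⟩
    have h1 := hfar a haA p hp r hr hra
    have h2 := hfar p hp a haA r hr hra
    unfold inRect at *
    lia
  have hmem : ((u.1, a.2) : Pt) ∈ greedyG n X :=
    mem_greedyG.2 ⟨by simpa using hX.time_mem_range haX, a, haX, rfl, u, rfl, hTa⟩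
  have := hempty _ (mem_union_right _ hmem) htop (by unfold inRect; simp only; lia)
  have h2 := congrArg Prod.snd this
  simp only at h2
  lia

/-- Fix a decomposition tree `T` of `X`. Let `p ∈ X`, `p₁ ∈ G` with
`CP(p₁) = (p, q)`, and `B := RT(p)`. Then `B` is not the root and `q` belongs to some block
`B'` that is a child of the parent of `B` with `B' ≠ B`. -/
theorem pair_in_sibling (n : ℕ) (X : Finset Pt) (hX : IsPermPointSet n X)
    (T : DecompTree X) (p : Pt) (hp : p ∈ X) (p₁ q : Pt) (hp₁ : p₁ ∈ greedyG n X)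
    (hCP : CP X (greedyG n X) p₁ = (p, q)) :
    RT T p ≠ X ∧
      ∃ B' ∈ T.children (T.parent (RT T p)), B' ≠ RT T p ∧ q ∈ B' := by
  obtain ⟨hOP, hOPq⟩ := Prod.mk.inj hCP
  have hOPp := OP_spec (mem_union_right X hp₁)
  rw [hOP] at hOPp
  obtain ⟨-, p', hp', hpp₁, u, huk, hT⟩ := mem_greedyG.1 hp₁
  obtain rfl : p' = p := hX.eq_of_time_eq_s14 hp' hp (hpp₁.trans hOPp.2.symm)
  have hfirst : firstAbove (X ∪ greedyG n X) p₁ = u := by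
    refine firstAbove_eq hT.1 huk (by have := hT.2.1; lia) fun r hr hrk hrt => ?_
    by_contra! hur
    have := hT.2.2.2 r hr (by lia) (by unfold inRect; lia)
    rw [this] at hur
    exact lt_irrefl _ hur
  have hq := OP_spec hT.1
  rw [hfirst] at hOPq
  rw [hOPq] at hq
  have hqp : q.2 < p'.2 := hq.2 ▸ hT.2.1
  obtain ⟨hBn, hBtop, hBmax⟩ := RT_spec T hp
  set B := RT T p' with hB
  have hBspec := TopPt_spec (T.isBlock_nodes B hBn).1
  rw [hBtop] at hBspec
  have hqB : q ∉ B := fun h => absurd (hBspec.2 q h) (by lia)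
  have hBX : B ≠ X := fun h => hqB (h ▸ hq.1)
  refine ⟨hBX, ?_⟩
  have hAn := T.parent_mem B hBn hBX
  have hBA := T.ssubset_parent B hBn hBX
  set A := T.parent B with hA
  have hAb := T.isBlock_nodes A hAn
  have hpA : p' ∈ A := hBA.1 hBspec.1
  have hAspec := TopPt_spec hAb.1
  have htop : (TopPt A).2 < p'.2 := by
    refine lt_of_le_of_ne (hAspec.2 p' hpA) fun h => hBA.2 (hBmax A hAn ?_)
    exact hX.eq_of_time_eq_s14 (hAb.subset hAspec.1) hp h
  have huA := hAb.top_time_le_of_touches hX hpA htop hT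
  have hqA : q ∈ A := hAb.mem_of_time hAspec.1 hpA hq.1 (by lia) hqp.le
  have hcard : A.card ≠ 1 := fun h => by
    obtain ⟨b, hb⟩ := card_eq_one.1 h
    rw [hb, mem_singleton] at hqA hpA
    rw [hqA, hpA] at hqp
    exact lt_irrefl _ hqp
  obtain ⟨C, ⟨hC, hCX, hCA, hqC⟩, -⟩ := T.children_partition A hAn hcard q hqA
  exact ⟨C, mem_filter.2 ⟨hC, hCX, hCA⟩, fun h => hqB (h ▸ hqC), hqC⟩
end
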